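/- (Linear brane normal form) Let 𝕀 be a linear generalized complex structure on 𝕍 = V ⊕ V*, and let (S, τ) be a linear rank-0 brane: S ⊆ V a subspace with dim_ℝ S even, and τ ⊆ 𝕍 a maximal isotropic, 𝕀-invariant subspace with a(τ) = S. Then there exists an isotropic, 𝕀-invariant subspace U ⊆ 𝕍 complementary to V* (i.e., 𝕍 = U ⊕ V*) such that τ = (U ∩ τ) ⊕ (τ ∩ V*); consequently, writing 𝕀 in the splitting 𝕍 = U ⊕ V*, it takes the form (−I, P; 0, I*) with I a complex structure on V ≅ U for which S is a complex subspace, and τ ≅ S ⊕ Ann(S). -/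

import Mathlib

/- STATEMENT 10 (Linear brane normal form): Given a linear generalized complex
   structure 𝕀 on 𝕍 = V ⊕ V* and a linear rank-0 brane (S, τ) with dim S even,
   there is an isotropic, 𝕀-invariant subspace U complementary to V* with
   τ = (U ∩ τ) ⊕ (τ ∩ V*); in the splitting 𝕍 = U ⊕ V*, 𝕀 is upper-triangular
   with a complex structure I on V ≅ U for which S is a complex subspace
   (𝕀 preserves U ∩ τ and projects it onto S), and τ ≅ s(S) ⊕ Ann(S). -/

variable {V : Type*} [AddCommGroup V] [Module ℝ V] [FiniteDimensional ℝ V]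

noncomputable def gpair (u v : V × Module.Dual ℝ V) : ℝ := (u.2 v.1 + v.2 u.1) / 2

/-- V* ⊂ V ⊕ V*, as the kernel of the anchor projection. -/
def dualSub (V : Type*) [AddCommGroup V] [Module ℝ V] :
    Submodule ℝ (V × Module.Dual ℝ V) :=
  LinearMap.ker (LinearMap.fst ℝ V (Module.Dual ℝ V))

namespace Aux
variable {E : Type*} [AddCommGroup E] [Module ℝ E] [FiniteDimensional ℝ E]

theorem exists_proj (J : E →ₗ[ℝ] E) (hJ : ∀ u, J (J u) = -u) (T : Submodule ℝ E)
    (hT : ∀ u ∈ T, J u ∈ T) :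
    ∃ p : E →ₗ[ℝ] E, (∀ x, p x ∈ T) ∧ (∀ t ∈ T, p t = t) ∧ ∀ x, p (J x) = J (p x) := by
  obtain ⟨f, hf⟩ := T.subtype.exists_leftInverse_of_injective (Submodule.ker_subtype T)
  have hf' : ∀ t (ht : t ∈ T), f t = ⟨t, ht⟩ := fun t ht => by
    simpa using LinearMap.congr_fun hf ⟨t, ht⟩
  set p0 : E →ₗ[ℝ] E := T.subtype ∘ₗ f with hp0
  have h1 : ∀ x, p0 x ∈ T := fun x => (f x).2
  have h2 : ∀ t ∈ T, p0 t = t := fun t ht => by simp [hp0, hf' t ht]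
  refine ⟨(1/2 : ℝ) • (p0 - J ∘ₗ p0 ∘ₗ J), ?_, ?_, ?_⟩
  · intro x
    exact T.smul_mem _ (T.sub_mem (h1 x) (hT _ (h1 _)))
  · intro t ht
    simp only [LinearMap.smul_apply, LinearMap.sub_apply, LinearMap.comp_apply, h2 t ht,
      h2 _ (hT t ht), hJ]
    module
  · intro x
    simp only [LinearMap.smul_apply, LinearMap.sub_apply, LinearMap.comp_apply, hJ, map_neg,
      map_smul, map_sub]
    module

theorem even_of_inv (J : E →ₗ[ℝ] E) (hJ : ∀ u, J (J u) = -u) (T : Submodule ℝ E)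
    (hT : ∀ u ∈ T, J u ∈ T) : Even (Module.finrank ℝ T) := by
  by_contra hodd
  rw [Nat.not_even_iff_odd] at hodd
  set K : T →ₗ[ℝ] T := J.restrict hT with hK
  have h : K * K = (-1 : ℝ) • (1 : T →ₗ[ℝ] T) := by
    ext x
    simp [hK, hJ]
  have h2 := congrArg LinearMap.det h
  rw [map_mul, LinearMap.det_smul, hodd.neg_one_pow, map_one] at h2
  nlinarith [mul_self_nonneg (LinearMap.det K)]

theorem exists_cplx (R : Submodule ℝ E) (hR : Even (Module.finrank ℝ R)) :
    ∃ K : R →ₗ[ℝ] R, ∀ x, K (K x) = -x := by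
  obtain ⟨m, hm⟩ := hR
  have e : R ≃ₗ[ℝ] ((Fin m → ℝ) × (Fin m → ℝ)) := LinearEquiv.ofFinrankEq _ _ (by simp [hm])
  let K0 : ((Fin m → ℝ) × (Fin m → ℝ)) →ₗ[ℝ] ((Fin m → ℝ) × (Fin m → ℝ)) :=
    LinearMap.prod (-(LinearMap.snd ℝ _ _)) (LinearMap.fst ℝ _ _)
  have h0 : ∀ x, K0 (K0 x) = -x := by
    intro x
    ext <;> simp [K0]
  refine ⟨e.symm.toLinearMap ∘ₗ K0 ∘ₗ e.toLinearMap, fun x => ?_⟩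
  simp [h0]

theorem exists_compl (J : E →ₗ[ℝ] E) (hJ : ∀ u, J (J u) = -u) (T : Submodule ℝ E)
    (hT : ∀ u ∈ T, J u ∈ T) (A : Submodule ℝ E) (hA : A ≤ T) (hAe : Even (Module.finrank ℝ A)) :
    ∃ C : Submodule ℝ E, C ≤ T ∧ (∀ u ∈ C, J u ∈ C) ∧ (∀ x ∈ A, x ∈ C → x = 0) ∧ A ⊔ C = T := by
  set A0 : Submodule ℝ E := A ⊓ A.comap J with hA0
  have hA0inv : ∀ u ∈ A0, J u ∈ A0 := by
    rintro u ⟨h1, h2⟩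
    refine ⟨h2, ?_⟩
    change J (J u) ∈ A
    rw [hJ]; exact A.neg_mem h1
  have hA0e := even_of_inv J hJ A0 hA0inv
  -- complement of A0 in A
  obtain ⟨W, hW⟩ := Submodule.exists_isCompl A0
  set R : Submodule ℝ E := A ⊓ W with hR
  have hRA : A0 ⊔ R = A := by
    rw [hR, inf_comm, ← sup_inf_assoc_of_le W (inf_le_left : A0 ≤ A), hW.sup_eq_top, top_inf_eq]
  have hRd : A0 ⊓ R = ⊥ := by
    rw [eq_bot_iff, ← hW.inf_eq_bot]
    exact inf_le_inf_left _ inf_le_right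
  have hRe : Even (Module.finrank ℝ R) := by
    have := Submodule.finrank_sup_add_finrank_inf_eq A0 R
    rw [hRA, hRd, finrank_bot, add_zero] at this
    rw [this, Nat.even_add] at hAe
    exact hAe.1 hA0e
  obtain ⟨K, hK⟩ := exists_cplx R hRe
  set C' : Submodule ℝ E := LinearMap.range (J ∘ₗ R.subtype - R.subtype ∘ₗ K) with hC'
  have hC'm : ∀ x, x ∈ C' ↔ ∃ r : R, J r - K r = x := fun x => by simp [hC', LinearMap.mem_range]
  set M : Submodule ℝ E := A ⊔ A.map J with hM
  have hMT : M ≤ T := sup_le hA (by rintro _ ⟨a, ha, rfl⟩; exact hT _ (hA ha))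
  have hMinv : ∀ u ∈ M, J u ∈ M := by
    intro u hu
    obtain ⟨a, ha, _, ⟨b, hb, rfl⟩, rfl⟩ := Submodule.mem_sup.1 hu
    rw [map_add, hJ]
    exact M.add_mem (Submodule.mem_sup_right ⟨a, ha, rfl⟩)
      (Submodule.mem_sup_left (A.neg_mem hb))
  have hC'M : C' ≤ M := by
    intro x hx
    obtain ⟨r, rfl⟩ := (hC'm x).1 hx
    exact M.sub_mem (Submodule.mem_sup_right ⟨r, r.2.1, rfl⟩) (Submodule.mem_sup_left (K r).2.1)
  obtain ⟨p, hp1, hp2, hp3⟩ := exists_proj J hJ M hMinv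
  set E1 : Submodule ℝ E := T ⊓ LinearMap.ker p with hE1
  refine ⟨C' ⊔ E1, sup_le (hC'M.trans hMT) inf_le_left, ?_, ?_, ?_⟩
  · intro u hu
    obtain ⟨x, hx, y, hy, rfl⟩ := Submodule.mem_sup.1 hu
    rw [map_add]
    refine Submodule.add_mem _ (Submodule.mem_sup_left ?_) (Submodule.mem_sup_right ⟨hT _ hy.1, ?_⟩)
    · obtain ⟨r, rfl⟩ := (hC'm x).1 hx
      refine (hC'm _).2 ⟨-K r, ?_⟩
      simp only [map_neg, map_sub, hJ, hK, Submodule.coe_neg]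
      abel
    · have : p y = 0 := hy.2
      simp [hp3, this]
  · intro z hzA hz
    obtain ⟨x, hx, y, hy, rfl⟩ := Submodule.mem_sup.1 hz
    have hpy : p y = 0 := hy.2
    have hzM : p (x + y) = x + y := hp2 _ (Submodule.mem_sup_left hzA)
    rw [map_add, hpy, hp2 x (hC'M hx)] at hzM
    have hy0 : y = 0 := by simpa using hzM
    subst hy0
    rw [add_zero] at hzA ⊢
    obtain ⟨r, rfl⟩ := (hC'm x).1 hx
    have hJr : J r ∈ A := by
      have := A.add_mem hzA (K r).2.1
      simpa using this
    have : (r : E) ∈ A0 ⊓ R := ⟨⟨r.2.1, hJr⟩, r.2⟩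
    rw [hRd, Submodule.mem_bot] at this
    have hr : r = 0 := Subtype.ext this
    simp [hr]
  · apply le_antisymm (sup_le hA (sup_le (hC'M.trans hMT) inf_le_left))
    have hMle : M ≤ A ⊔ C' := by
      refine sup_le le_sup_left ?_
      rintro _ ⟨a, ha, rfl⟩
      have ha' : a ∈ A := ha
      rw [← hRA] at ha'
      obtain ⟨b, hb, r, hr, rfl⟩ := Submodule.mem_sup.1 ha'
      rw [map_add]
      refine Submodule.add_mem _ (Submodule.mem_sup_left hb.2) ?_
      have h1 : J r = (K ⟨r, hr⟩ : E) + (J r - K ⟨r, hr⟩) := by abel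
      rw [h1]
      exact Submodule.add_mem _ (Submodule.mem_sup_left (K ⟨r, hr⟩).2.1)
        (Submodule.mem_sup_right ((hC'm _).2 ⟨⟨r, hr⟩, rfl⟩))
    intro t ht
    have h1 : t = p t + (t - p t) := by abel
    rw [h1, ← sup_assoc]
    refine Submodule.add_mem _ (Submodule.mem_sup_left (hMle (hp1 t))) (Submodule.mem_sup_right
      ⟨T.sub_mem ht (hMT (hp1 t)), ?_⟩)
    change p (t - p t) = 0
    rw [map_sub, hp2 _ (hp1 t), sub_self]

/-- A `J`-invariant isotropic complement of a `J`-invariant Lagrangian subspace. -/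
theorem exists_lagr (J : E →ₗ[ℝ] E) (hJ : ∀ u, J (J u) = -u)
    (B : LinearMap.BilinForm ℝ E) (hB : B.Nondegenerate) (hs : ∀ x y, B x y = B y x)
    (hBJ : ∀ x y, B (J x) (J y) = B x y)
    (T : Submodule ℝ E) (hT : ∀ u ∈ T, J u ∈ T) (hiso : ∀ u ∈ T, ∀ v ∈ T, B u v = 0)
    (hmax : ∀ x, (∀ t ∈ T, B x t = 0) → x ∈ T) :
    ∃ W : Submodule ℝ E, (∀ u ∈ W, J u ∈ W) ∧ (∀ u ∈ W, ∀ v ∈ W, B u v = 0) ∧ IsCompl T W := by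
  obtain ⟨p, hp1, hp2, hp3⟩ := exists_proj J hJ T hT
  set r := B.leftAdjointOfNondegenerate hB p with hr
  have hadj : ∀ x y, B (r x) y = B x (p y) := fun x y =>
    B.isAdjointPairLeftAdjointOfNondegenerate hB p x y
  have hsep : ∀ x, (∀ y, B x y = 0) → x = 0 := hB.1
  have hJ2 : ∀ x y, B (J x) y = - B x (J y) := by
    intro x y
    have := hBJ x (J y)
    rw [hJ, map_neg] at this
    linarith
  have hrJ : ∀ x, r (J x) = J (r x) := by
    intro x
    rw [← sub_eq_zero]
    apply hsep
    intro y
    rw [map_sub, LinearMap.sub_apply, hadj, hJ2, hJ2, hadj, hp3, sub_self]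
  have hrT : ∀ t ∈ T, r t = 0 := by
    intro t ht
    apply hsep
    intro y
    rw [hadj]
    exact hiso t ht _ (hp1 y)
  have hrI : ∀ x, x - r x ∈ T := by
    intro x
    apply hmax
    intro t ht
    rw [map_sub, LinearMap.sub_apply, hadj, hp2 t ht, sub_self]
  set q : E →ₗ[ℝ] E := (1/2 : ℝ) • (p + (LinearMap.id - r)) with hq
  have hqa : ∀ x, q x = (1/2 : ℝ) • (p x + (x - r x)) := fun x => by simp [hq]
  have hqT : ∀ x, q x ∈ T := fun x => by
    rw [hqa]; exact T.smul_mem _ (T.add_mem (hp1 x) (hrI x))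
  have hqt : ∀ t ∈ T, q t = t := fun t ht => by
    rw [hqa, hp2 t ht, hrT t ht]; module
  refine ⟨LinearMap.ker q, ?_, ?_, ?_⟩
  · intro u hu
    rw [LinearMap.mem_ker] at hu ⊢
    have : q (J u) = J (q u) := by
      rw [hqa, hqa, hp3, hrJ, map_smul, map_add, map_sub]
    rw [this, hu, map_zero]
  · intro u hu v hv
    rw [LinearMap.mem_ker, hqa, smul_eq_zero_iff_right (by norm_num)] at hu hv
    have h1 : B (p u + (u - r u)) v = 0 := by rw [hu]; simp
    have h2 : B u (p v + (v - r v)) = 0 := by rw [hv]; simp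
    simp only [map_add, map_sub, LinearMap.add_apply, LinearMap.sub_apply] at h1 h2
    have h3 := hadj u v
    have h4 := hadj v u
    rw [hs (r v) u, hs v (p u)] at h4
    linarith
  · constructor
    · rw [Submodule.disjoint_def]
      intro x hx hx'
      rw [LinearMap.mem_ker, hqt x hx] at hx'
      exact hx'
    · rw [codisjoint_iff, eq_top_iff]
      intro x _
      have h1 : x = q x + (x - q x) := by abel
      rw [h1]
      refine Submodule.add_mem _ (Submodule.mem_sup_left (hqT x)) (Submodule.mem_sup_right ?_)
      rw [LinearMap.mem_ker, map_sub, hqt _ (hqT x), sub_self]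

theorem main (J : E →ₗ[ℝ] E) (hJ : ∀ u, J (J u) = -u)
    (B : LinearMap.BilinForm ℝ E) (hB : B.Nondegenerate) (hs : ∀ x y, B x y = B y x)
    (hBJ : ∀ x y, B (J x) (J y) = B x y) (d : ℕ) (hd : Module.finrank ℝ E = d + d)
    (T : Submodule ℝ E) (hT : ∀ u ∈ T, J u ∈ T) (hiso : ∀ u ∈ T, ∀ v ∈ T, B u v = 0)
    (hTd : Module.finrank ℝ T = d) (hmax : ∀ x, (∀ t ∈ T, B x t = 0) → x ∈ T)
    (D : Submodule ℝ E) (hDd : Module.finrank ℝ D = d) (hDiso : ∀ u ∈ D, ∀ v ∈ D, B u v = 0)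
    (hev : Even (Module.finrank ℝ (T ⊓ D : Submodule ℝ E))) :
    ∃ U : Submodule ℝ E, (∀ u ∈ U, ∀ v ∈ U, B u v = 0) ∧ (∀ u ∈ U, J u ∈ U) ∧ IsCompl U D ∧
      (U ⊓ T) ⊔ (T ⊓ D) = T := by
  obtain ⟨C, hCT, hCJ, hCA, hAC⟩ := exists_compl J hJ T hT (T ⊓ D) inf_le_left hev
  obtain ⟨W, hWJ, hWiso, hTW⟩ := exists_lagr J hJ B hB hs hBJ T hT hiso hmax
  set X : Submodule ℝ E := W ⊓ B.orthogonal C with hX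
  have hXo : ∀ x ∈ X, ∀ c ∈ C, B c x = 0 := fun x hx c hc => hx.2 c hc
  have hUT : ∀ x ∈ C ⊔ X, x ∈ T → x ∈ C := by
    intro x hx hxT
    obtain ⟨c, hc, w, hw, rfl⟩ := Submodule.mem_sup.1 hx
    have hwT : w ∈ T := by
      have := T.sub_mem hxT (hCT hc)
      simpa using this
    have : w = 0 := Submodule.disjoint_def.1 hTW.disjoint w hwT hw.1
    simpa [this] using hc
  have hUo : ∀ x ∈ C ⊔ X, ∀ c ∈ C, B c x = 0 := by
    intro x hx c hc
    obtain ⟨c', hc', w, hw, rfl⟩ := Submodule.mem_sup.1 hx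
    rw [map_add, hiso c (hCT hc) c' (hCT hc'), hXo w hw c hc, add_zero]
  have hdisj : Disjoint (C ⊔ X) D := by
    rw [Submodule.disjoint_def]
    intro x hx hxD
    have hxT : x ∈ T := by
      apply hmax
      intro t ht
      rw [← hAC] at ht
      obtain ⟨a, ha, c, hc, rfl⟩ := Submodule.mem_sup.1 ht
      rw [map_add, hDiso x hxD a ha.2, hs x c, hUo x hx c hc, add_zero]
    exact hCA x ⟨hxT, hxD⟩ (hUT x hx hxT)
  have hCX : C ⊓ X = ⊥ := by
    rw [eq_bot_iff]
    intro x hx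
    exact Submodule.disjoint_def.1 hTW.disjoint x (hCT hx.1) hx.2.1
  refine ⟨C ⊔ X, ?_, ?_, ⟨hdisj, ?_⟩, ?_⟩
  · intro u hu v hv
    obtain ⟨c, hc, w, hw, rfl⟩ := Submodule.mem_sup.1 hu
    obtain ⟨c', hc', w', hw', rfl⟩ := Submodule.mem_sup.1 hv
    simp only [map_add, LinearMap.add_apply]
    rw [hiso c (hCT hc) c' (hCT hc'), hXo w' hw' c hc, hs w c', hXo w hw c' hc',
      hWiso w hw.1 w' hw'.1]
    simp
  · intro u hu
    obtain ⟨c, hc, w, hw, rfl⟩ := Submodule.mem_sup.1 hu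
    rw [map_add]
    refine Submodule.add_mem _ (Submodule.mem_sup_left (hCJ c hc)) (Submodule.mem_sup_right
      ⟨hWJ _ hw.1, ?_⟩)
    intro e he
    have h1 := hBJ (J e) w
    rw [hJ, hXo w hw _ (hCJ e he)] at h1
    change B e (J w) = 0
    simpa using h1
  · rw [codisjoint_iff]
    apply Submodule.eq_top_of_finrank_eq
    apply le_antisymm (Submodule.finrank_le _)
    have h1 := Submodule.finrank_sup_add_finrank_inf_eq (C ⊔ X) D
    have h2 := Submodule.finrank_sup_add_finrank_inf_eq C X
    have h3 := Submodule.finrank_sup_add_finrank_inf_eq W (B.orthogonal C)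
    have h4 := LinearMap.BilinForm.finrank_orthogonal hB C
    have h5 := Submodule.finrank_add_eq_of_isCompl hTW
    have h6 := Submodule.finrank_le (W ⊔ B.orthogonal C)
    have h7 := Submodule.finrank_le C
    rw [hdisj.eq_bot, finrank_bot] at h1
    rw [hCX, finrank_bot] at h2
    rw [← hX] at h3
    omega
  · apply le_antisymm (sup_le inf_le_right inf_le_left)
    conv_lhs => rw [← hAC]
    exact sup_le le_sup_right ((le_inf le_sup_left hCT).trans le_sup_left)

theorem finrank_map_ker {F : Type*} [AddCommGroup F] [Module ℝ F] (f : E →ₗ[ℝ] F)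
    (T : Submodule ℝ E) :
    Module.finrank ℝ (T.map f) + Module.finrank ℝ (T ⊓ LinearMap.ker f : Submodule ℝ E)
      = Module.finrank ℝ T := by
  have h1 := LinearMap.finrank_range_add_finrank_ker (f ∘ₗ T.subtype)
  rw [LinearMap.range_comp, Submodule.range_subtype, LinearMap.ker_comp] at h1
  rw [← h1, ← Submodule.map_comap_subtype, Submodule.finrank_map_subtype_eq]

end Aux

theorem stmt10 (J : (V × Module.Dual ℝ V) →ₗ[ℝ] (V × Module.Dual ℝ V))
    (hI2 : ∀ u, J (J u) = -u)
    (horth : ∀ u v, gpair (J u) (J v) = gpair u v)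
    (S : Submodule ℝ V) (hSeven : Even (Module.finrank ℝ S))
    (τ : Submodule ℝ (V × Module.Dual ℝ V))
    (hiso : ∀ u ∈ τ, ∀ v ∈ τ, gpair u v = 0)
    (hmax : Module.finrank ℝ τ = Module.finrank ℝ V)
    (hinv : ∀ u ∈ τ, J u ∈ τ)
    (hproj : Submodule.map (LinearMap.fst ℝ V (Module.Dual ℝ V)) τ = S) :
    ∃ U : Submodule ℝ (V × Module.Dual ℝ V),
      (∀ u ∈ U, ∀ v ∈ U, gpair u v = 0) ∧
      (∀ u ∈ U, J u ∈ U) ∧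
      IsCompl U (dualSub V) ∧
      (U ⊓ τ) ⊔ (τ ⊓ dualSub V) = τ ∧
      (∀ u ∈ U ⊓ τ, J u ∈ U ⊓ τ) ∧
      Submodule.map (LinearMap.fst ℝ V (Module.Dual ℝ V)) (U ⊓ τ) = S ∧
      (∀ ξ : Module.Dual ℝ V, ((0 : V), ξ) ∈ τ ↔ ∀ s ∈ S, ξ s = 0) := by
  classical
  let B : LinearMap.BilinForm ℝ (V × Module.Dual ℝ V) := LinearMap.mk₂ ℝ gpair
    (fun a b c => by simp [gpair]; ring) (fun a b c => by simp [gpair]; ring)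
    (fun a b c => by simp [gpair]; ring) (fun a b c => by simp [gpair]; ring)
  have hBg : ∀ u v, B u v = gpair u v := fun u v => rfl
  have hs : ∀ x y, B x y = B y x := fun x y => by simp only [hBg, gpair]; ring
  have hsep : ∀ x, (∀ y, B x y = 0) → x = 0 := by
    rintro ⟨x, ξ⟩ h
    have h1 : ξ = 0 := by
      ext v
      have := h (v, 0)
      simpa [hBg, gpair] using this
    have h2 : x = 0 := by
      rw [← Module.forall_dual_apply_eq_zero_iff ℝ]
      intro η
      have := h (0, η)
      simpa [hBg, gpair] using this
    rw [h1, h2]; rfl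
  have hB : B.Nondegenerate := ⟨hsep, fun y h => hsep y fun x => by rw [hs]; exact h x⟩
  have hE : Module.finrank ℝ (V × Module.Dual ℝ V)
      = Module.finrank ℝ V + Module.finrank ℝ V := by
    rw [Module.finrank_prod, Subspace.dual_finrank_eq]
  have hort : τ = B.orthogonal τ := by
    apply Submodule.eq_of_le_of_finrank_eq
    · intro x hx n hn
      exact hiso n hn x hx
    · rw [LinearMap.BilinForm.finrank_orthogonal hB, hE, hmax]; omega
  have hmx : ∀ x, (∀ t ∈ τ, B x t = 0) → x ∈ τ := by
    intro x hx
    rw [hort]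
    intro n hn
    change B n x = 0
    rw [hs]; exact hx n hn
  have hDd : Module.finrank ℝ (dualSub V) = Module.finrank ℝ V := by
    have h1 := LinearMap.finrank_range_add_finrank_ker (LinearMap.fst ℝ V (Module.Dual ℝ V))
    rw [LinearMap.range_eq_top.2 LinearMap.fst_surjective, finrank_top, hE] at h1
    exact Nat.add_left_cancel h1
  have hDiso : ∀ u ∈ dualSub V, ∀ v ∈ dualSub V, B u v = 0 := by
    intro u hu v hv
    have hu' : u.1 = 0 := hu
    have hv' : v.1 = 0 := hv
    simp [hBg, gpair, hu', hv']
  have hev : Even (Module.finrank ℝ (τ ⊓ dualSub V : Submodule ℝ (V × Module.Dual ℝ V))) := by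
    have h0 := Aux.even_of_inv J hI2 τ hinv
    have h1 := Aux.finrank_map_ker (LinearMap.fst ℝ V (Module.Dual ℝ V)) τ
    rw [hproj] at h1
    rw [← h1, Nat.even_add] at h0
    exact h0.1 hSeven
  obtain ⟨U, h1, h2, h3, h4⟩ := Aux.main J hI2 B hB hs horth _ hE τ hinv hiso hmax hmx
    (dualSub V) hDd hDiso hev
  refine ⟨U, h1, h2, h3, h4, fun u hu => ⟨h2 u hu.1, hinv u hu.2⟩, ?_, ?_⟩
  · have h5 : Submodule.map (LinearMap.fst ℝ V (Module.Dual ℝ V)) (τ ⊓ dualSub V) = ⊥ := by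
      rw [eq_bot_iff]
      rintro _ ⟨x, hx, rfl⟩
      exact hx.2
    rw [← hproj]
    conv_rhs => rw [← h4]
    rw [Submodule.map_sup, h5, sup_bot_eq]
  · intro ξ
    constructor
    · intro h s hsS
      rw [← hproj] at hsS
      obtain ⟨t, ht, rfl⟩ := hsS
      have := hiso _ h t ht
      simpa [gpair] using this
    · intro h
      apply hmx
      intro t ht
      have : ξ t.1 = 0 := h _ (by rw [← hproj]; exact ⟨t, ht, rfl⟩)
      simp [hBg, gpair, this]
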